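/- arXiv:1906.09520 — 2 statements merged into one kernel-verified Lean document; each statement's English description precedes it below -/
import Mathlib

section
/- Let m ≥ 1 and let h : Fin m → ℝ satisfy h k > 0 for all k. Define f : (Fin m → ℝ) → ℝ by f(ρ) = (∑_{k} h k / ρ k + 1)⁻¹. Then f is concave on the open positive orthant {ρ : Fin m → ℝ | ∀ k, ρ k > 0}. -/
/-! The value of `(∑ hᵢ / xᵢ)⁻¹` is at most `(∑ (hᵢ / zᵢ²) xᵢ) / (∑ hᵢ / zᵢ)²` for all positive `x`
and `z`: this is the Cauchy–Schwarz inequality applied to `hᵢ / xᵢ` and `(hᵢ / zᵢ²) xᵢ`. The bound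
is linear in `x` with nonnegative coefficients and is attained at `x = z`. Hence substituting
positive concave functions for the `xᵢ` gives a function which is touched from above, at every
point, by a concave function, and such a function is concave. The noise term is one more summand,
whose concave function is constant. -/

section ConcaveOn

variable {𝕜 E β ι : Type*} [Semiring 𝕜] [PartialOrder 𝕜] [AddCommMonoid E] [AddCommMonoid β]
  [PartialOrder β] [IsOrderedAddMonoid β] [SMul 𝕜 E] [Module 𝕜 β] {s : Set E}

theorem concaveOn_sum {t : Finset ι} {f : ι → E → β} (hs : Convex 𝕜 s)
    (hf : ∀ i ∈ t, ConcaveOn 𝕜 s (f i)) : ConcaveOn 𝕜 s fun x => ∑ i ∈ t, f i x := by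
  refine ⟨hs, fun x hx y hy a b ha hb hab => ?_⟩
  rw [Finset.smul_sum, Finset.smul_sum, ← Finset.sum_add_distrib]
  exact Finset.sum_le_sum fun i hi => (hf i hi).2 hx hy ha hb hab

theorem concaveOn_of_forall_exists_concaveOn_ge [PosSMulMono 𝕜 β] {F : E → β}
    (h : ∀ z ∈ s, ∃ g : E → β, ConcaveOn 𝕜 s g ∧ (∀ x ∈ s, F x ≤ g x) ∧ g z = F z) :
    ConcaveOn 𝕜 s F := by
  have hs : Convex 𝕜 s := fun x hx =>
    have ⟨_, hg, _⟩ := h x hx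
    hg.1 hx
  refine ⟨hs, fun x hx y hy a b ha hb hab => ?_⟩
  obtain ⟨g, hg, hFg, hgz⟩ := h (a • x + b • y) (hs hx hy ha hb hab)
  calc
    a • F x + b • F y ≤ a • g x + b • g y := by gcongr <;> exact hFg _ ‹_›
    _ ≤ g (a • x + b • y) := hg.2 hx hy ha hb hab
    _ = F (a • x + b • y) := hgz

end ConcaveOn

section HarmonicSum

variable {𝕜 ι : Type*} [Field 𝕜] [LinearOrder 𝕜] [IsStrictOrderedRing 𝕜] {t : Finset ι} {h : ι → 𝕜}

theorem sum_div_pos {x : ι → 𝕜} (hh : ∀ i ∈ t, 0 ≤ h i) (hh' : ∃ i ∈ t, 0 < h i)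
    (hx : ∀ i ∈ t, 0 < x i) : 0 < ∑ i ∈ t, h i / x i :=
  have ⟨i, hi, hhi⟩ := hh'
  Finset.sum_pos' (fun j hj => div_nonneg (hh j hj) (hx j hj).le) ⟨i, hi, div_pos hhi (hx i hi)⟩

theorem sq_sum_div_le_sum_div_mul_sum {x z : ι → 𝕜} (hh : ∀ i ∈ t, 0 ≤ h i)
    (hx : ∀ i ∈ t, 0 < x i) :
    (∑ i ∈ t, h i / z i) ^ 2 ≤ (∑ i ∈ t, h i / x i) * ∑ i ∈ t, h i / z i ^ 2 * x i := by
  refine Finset.sum_sq_le_sum_mul_sum_of_sq_le_mul t (fun i hi => ?_) (fun i hi => ?_)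
    fun i hi => le_of_eq ?_
  · exact div_nonneg (hh i hi) (hx i hi).le
  · exact mul_nonneg (div_nonneg (hh i hi) (sq_nonneg _)) (hx i hi).le
  · have := (hx i hi).ne'
    field_simp

theorem inv_sum_div_le {x z : ι → 𝕜} (hh : ∀ i ∈ t, 0 ≤ h i) (hh' : ∃ i ∈ t, 0 < h i)
    (hx : ∀ i ∈ t, 0 < x i) (hz : ∀ i ∈ t, 0 < z i) :
    (∑ i ∈ t, h i / x i)⁻¹ ≤ (∑ i ∈ t, h i / z i ^ 2 * x i) / (∑ i ∈ t, h i / z i) ^ 2 := by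
  rw [le_div_iff₀ (pow_pos (sum_div_pos hh hh' hz) 2), inv_mul_le_iff₀ (sum_div_pos hh hh' hx)]
  exact sq_sum_div_le_sum_div_mul_sum hh hx

variable {E : Type*} [AddCommMonoid E] [SMul 𝕜 E] {s : Set E} {f : ι → E → 𝕜}

theorem concaveOn_inv_sum_div (hh : ∀ i ∈ t, 0 ≤ h i) (hh' : ∃ i ∈ t, 0 < h i)
    (hf : ∀ i ∈ t, ConcaveOn 𝕜 s (f i)) (hpos : ∀ i ∈ t, ∀ x ∈ s, 0 < f i x) :
    ConcaveOn 𝕜 s fun x => (∑ i ∈ t, h i / f i x)⁻¹ := by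
  have hs : Convex 𝕜 s :=
    have ⟨i, hi, _⟩ := hh'
    (hf i hi).1
  refine concaveOn_of_forall_exists_concaveOn_ge fun z hz => ?_
  set S := ∑ i ∈ t, h i / f i z
  have hconcave : ConcaveOn 𝕜 s fun x => ∑ i ∈ t, h i / f i z ^ 2 * f i x :=
    concaveOn_sum hs fun i hi => (hf i hi).smul (div_nonneg (hh i hi) (sq_nonneg _))
  refine ⟨fun x => (∑ i ∈ t, h i / f i z ^ 2 * f i x) / S ^ 2, ?_, fun x hx => ?_, ?_⟩
  · simpa only [smul_eq_mul, inv_mul_eq_div] using hconcave.smul (inv_nonneg.2 (sq_nonneg S))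
  · exact inv_sum_div_le hh hh' (fun i hi => hpos i hi x hx) fun i hi => hpos i hi z hz
  · have hsum : ∑ i ∈ t, h i / f i z ^ 2 * f i z = S :=
      Finset.sum_congr rfl fun i hi => by
        have := (hpos i hi z hz).ne'
        field_simp
    calc
      (∑ i ∈ t, h i / f i z ^ 2 * f i z) / S ^ 2 = S / S ^ 2 := by rw [hsum]
      _ = S⁻¹ := by rw [sq, div_self_mul_self']

theorem stmt_0_general {c : 𝕜} (hc : 0 < c) (hs : Convex 𝕜 s) (hh : ∀ i ∈ t, 0 ≤ h i)
    (hf : ∀ i ∈ t, ConcaveOn 𝕜 s (f i)) (hpos : ∀ i ∈ t, ∀ x ∈ s, 0 < f i x) :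
    ConcaveOn 𝕜 s fun x => (∑ i ∈ t, h i / f i x + c)⁻¹ := by
  have hconcave := concaveOn_inv_sum_div (t := t.insertNone) (h := fun o => o.elim c h)
    (f := fun o => o.elim (fun _ => 1) f)
    (Finset.forall_mem_insertNone.2 ⟨hc.le, hh⟩)
    ⟨none, Finset.none_mem_insertNone, hc⟩
    (Finset.forall_mem_insertNone.2 ⟨concaveOn_const 1 hs, hf⟩)
    (Finset.forall_mem_insertNone.2 ⟨fun _ _ => one_pos, hpos⟩)
  simpa only [Finset.sum_insertNone, Option.elim, div_one, add_comm c] using hconcave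

end HarmonicSum

theorem convex_setOf_forall_pos {𝕜 ι β : Type*} [Semiring 𝕜] [PartialOrder 𝕜] [AddCommMonoid β]
    [PartialOrder β] [IsOrderedCancelAddMonoid β] [Module 𝕜 β] [PosSMulStrictMono 𝕜 β] :
    Convex 𝕜 {x : ι → β | ∀ i, 0 < x i} := by
  simpa [Set.pi] using convex_pi (s := Set.univ) fun (_ : ι) _ => convex_Ioi (𝕜 := 𝕜) (0 : β)

/-- Proposition 1: f(ρ) = (∑ₖ h k / ρ k + 1)⁻¹ is concave on the open positive orthant,
when all h k > 0. -/
theorem stmt_0 (m : ℕ) (hm : 1 ≤ m) (h : Fin m → ℝ) (hh : ∀ k, 0 < h k) :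
    ConcaveOn ℝ {ρ : Fin m → ℝ | ∀ k, 0 < ρ k}
      (fun ρ : Fin m → ℝ => (∑ k, h k / ρ k + 1)⁻¹) :=
  stmt_0_general one_pos convex_setOf_forall_pos (fun k _ => (hh k).le)
    (fun k _ => (LinearMap.proj k).concaveOn convex_setOf_forall_pos) fun k _ _ hρ => hρ k
end

section
/- Let c₁ ≥ 0, c₂ ≥ 0, and g > 0. The function P : ℝ² × ℝ² × ℝ → ℝ defined by P(v, a, θ) = c₁‖v‖³ + (c₂/θ)(1 + ‖a‖²/g) is convex on the set ℝ² × ℝ² × {θ : θ > 0}. -/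
/-!
For `t > 0` the quotient `u² / t` is the maximum over `c` of `2cu - c²t`, attained at `c = u / t`.
If `u = f x ≥ 0` is convex in `x` and `t = h x > 0` is concave, then only slopes `c ≥ 0` matter, and
for these `2cf - c²h` is convex; hence so is the maximum `f² / h`. Both terms of the propulsion
power divided by the slack variable `θ` have this form, with `f = 1` and with `f = ‖a‖`.
-/

section ConvexQuotient

variable {𝕜 : Type*} [Field 𝕜] [LinearOrder 𝕜] [IsStrictOrderedRing 𝕜]

lemma two_mul_mul_sub_sq_mul_le_sq_div {t : 𝕜} (ht : 0 < t) (u c : 𝕜) :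
    2 * c * u - c ^ 2 * t ≤ u ^ 2 / t := by
  have hgap : u ^ 2 / t - (2 * c * u - c ^ 2 * t) = (u - c * t) ^ 2 / t := by
    field_simp
    ring
  have hgap_nonneg : 0 ≤ (u - c * t) ^ 2 / t := by positivity
  linarith

variable {E : Type*} [AddCommGroup E] [Module 𝕜 E] {s : Set E} {f h : E → 𝕜}

lemma convexOn_sq_div (hf : ConvexOn 𝕜 s f) (hf₀ : ∀ ⦃x⦄, x ∈ s → 0 ≤ f x)
    (hh : ConcaveOn 𝕜 s h) (hh₀ : ∀ ⦃x⦄, x ∈ s → 0 < h x) :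
    ConvexOn 𝕜 s fun x ↦ f x ^ 2 / h x := by
  refine ⟨hf.1, fun x hx y hy a b ha hb hab ↦ ?_⟩
  have hz : a • x + b • y ∈ s := hf.1 hx hy ha hb hab
  set z := a • x + b • y
  set c := f z / h z with hc
  have hc₀ : 0 ≤ c := div_nonneg (hf₀ hz) (hh₀ hz).le
  have hminorant : ConvexOn 𝕜 s fun w ↦ 2 * c * f w - c ^ 2 * h w :=
    (hf.smul (mul_nonneg zero_le_two hc₀)).sub (hh.smul (sq_nonneg c))
  have hattained : f z ^ 2 / h z = 2 * c * f z - c ^ 2 * h z := by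
    have hz₀ : h z ≠ 0 := (hh₀ hz).ne'
    rw [hc]
    field_simp
    ring
  calc f z ^ 2 / h z
      = 2 * c * f z - c ^ 2 * h z := hattained
    _ ≤ a • (2 * c * f x - c ^ 2 * h x) + b • (2 * c * f y - c ^ 2 * h y) :=
        hminorant.2 hx hy ha hb hab
    _ ≤ a • (f x ^ 2 / h x) + b • (f y ^ 2 / h y) := by
        gcongr
        · exact two_mul_mul_sub_sq_mul_le_sq_div (hh₀ hx) _ _
        · exact two_mul_mul_sub_sq_mul_le_sq_div (hh₀ hy) _ _

lemma convexOn_inv_of_concaveOn (hh : ConcaveOn 𝕜 s h) (hh₀ : ∀ ⦃x⦄, x ∈ s → 0 < h x) :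
    ConvexOn 𝕜 s fun x ↦ (h x)⁻¹ := by
  simpa only [one_pow, one_div] using
    convexOn_sq_div (convexOn_const 1 hh.1) (fun _ _ ↦ zero_le_one) hh hh₀

end ConvexQuotient

lemma convexOn_norm_linearMap {E F : Type*} [AddCommGroup E] [Module ℝ E]
    [SeminormedAddCommGroup F] [NormedSpace ℝ F] (L : E →ₗ[ℝ] F) {s : Set E} (hs : Convex ℝ s) :
    ConvexOn ℝ s fun x ↦ ‖L x‖ :=
  (convexOn_univ_norm.comp_linearMap L).subset (Set.subset_univ s) hs

theorem stmt_6_general {V A : Type*} [SeminormedAddCommGroup V] [NormedSpace ℝ V]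
    [SeminormedAddCommGroup A] [NormedSpace ℝ A] (n : ℕ) (c₁ c₂ g : ℝ)
    (hc₁ : 0 ≤ c₁) (hc₂ : 0 ≤ c₂) (hg : 0 < g) :
    ConvexOn ℝ {p : V × A × ℝ | 0 < p.2.2}
      (fun p : V × A × ℝ ↦ c₁ * ‖p.1‖ ^ n + c₂ / p.2.2 * (1 + ‖p.2.1‖ ^ 2 / g)) := by
  set s : Set (V × A × ℝ) := {p | 0 < p.2.2}
  let v : V × A × ℝ →ₗ[ℝ] V := LinearMap.fst ℝ V (A × ℝ)
  let a : V × A × ℝ →ₗ[ℝ] A := LinearMap.fst ℝ A ℝ ∘ₗ LinearMap.snd ℝ V (A × ℝ)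
  let θ : V × A × ℝ →ₗ[ℝ] ℝ := LinearMap.snd ℝ A ℝ ∘ₗ LinearMap.snd ℝ V (A × ℝ)
  have hs : Convex ℝ s := (convex_Ioi 0).linear_preimage θ
  have hθ : ConcaveOn ℝ s fun p ↦ p.2.2 := θ.concaveOn hs
  have hθ₀ : ∀ ⦃p⦄, p ∈ s → 0 < p.2.2 := fun _ hp ↦ hp
  have hv_pow : ConvexOn ℝ s fun p ↦ ‖p.1‖ ^ n :=
    (convexOn_norm_linearMap v hs).pow (fun _ _ ↦ norm_nonneg _) n
  have hθ_inv : ConvexOn ℝ s fun p ↦ p.2.2⁻¹ := convexOn_inv_of_concaveOn hθ hθ₀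
  have ha_sq_div : ConvexOn ℝ s fun p ↦ ‖p.2.1‖ ^ 2 / p.2.2 :=
    convexOn_sq_div (convexOn_norm_linearMap a hs) (fun _ _ ↦ norm_nonneg _) hθ hθ₀
  refine (((hv_pow.smul hc₁).add (hθ_inv.smul hc₂)).add
    (ha_sq_div.smul (div_nonneg hc₂ hg.le))).congr fun p _ ↦ ?_
  simp only [Pi.add_apply, smul_eq_mul]
  ring

/-- The propulsion power P(v,a,θ) = c₁‖v‖³ + (c₂/θ)(1 + ‖a‖²/g) is jointly convex in
(v, a, θ) on ℝ² × ℝ² × {θ > 0}. -/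
theorem stmt_6 (c₁ c₂ g : ℝ) (hc₁ : 0 ≤ c₁) (hc₂ : 0 ≤ c₂) (hg : 0 < g) :
    ConvexOn ℝ
      {p : EuclideanSpace ℝ (Fin 2) × EuclideanSpace ℝ (Fin 2) × ℝ | 0 < p.2.2}
      (fun p : EuclideanSpace ℝ (Fin 2) × EuclideanSpace ℝ (Fin 2) × ℝ =>
        c₁ * ‖p.1‖ ^ 3 + c₂ / p.2.2 * (1 + ‖p.2.1‖ ^ 2 / g)) :=
  stmt_6_general 3 c₁ c₂ g hc₁ hc₂ hg
end
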